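/- arXiv:1206.6517 — 6 statements merged into one kernel-verified Lean document; each statement's English description precedes it below -/
import Mathlib

section
/- There are exactly 27 lines: the set of vectors L ∈ (Fin 7 → ℤ) with ⟨L,L⟩ = −1 and ⟨L,K⟩ = −1 is finite and has cardinality 27. -/
/-- The symmetric bilinear form of signature (1,6) on the lattice `Fin 7 → ℤ`,
modelling the Picard lattice of a smooth cubic surface. -/
def B (x y : Fin 7 → ℤ) : ℤ :=
  x 0 * y 0 - x 1 * y 1 - x 2 * y 2 - x 3 * y 3 - x 4 * y 4 - x 5 * y 5 - x 6 * y 6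

/-- The canonical class `K = (-3,1,1,1,1,1,1)`. -/
def K : Fin 7 → ℤ := ![-3, 1, 1, 1, 1, 1, 1]

/-- A line is a vector `L` with `⟨L,L⟩ = -1` and `⟨L,K⟩ = -1`. -/
def IsLine (L : Fin 7 → ℤ) : Prop := B L L = -1 ∧ B L K = -1

/-- The 27 candidate classes: the exceptional classes, the lines through two points,
and the conics through five points. -/
def lineList : Finset (Fin 7 → ℤ) :=
  (Finset.univ.image fun i : Fin 6 => fun j : Fin 7 => if j = i.succ then 1 else 0) ∪
  ((Finset.univ.filter fun p : Fin 6 × Fin 6 => p.1 < p.2).image fun p => fun j : Fin 7 =>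
    if j = 0 then 1 else if j = p.1.succ ∨ j = p.2.succ then -1 else 0) ∪
  (Finset.univ.image fun i : Fin 6 => fun j : Fin 7 =>
    if j = 0 then 2 else if j = i.succ then 0 else -1)

lemma lineList_card : lineList.card = 27 := by decide +kernel

lemma lineList_isLine : ∀ L ∈ lineList, B L L = -1 ∧ B L K = -1 := by decide +kernel

lemma zero_one_aux (x : ℤ) : 0 ≤ x * x - x := by
  rcases le_or_gt x 0 with h | h <;> nlinarith

lemma zero_one_eq (x : ℤ) (h : x * x - x = 0) : x = 0 ∨ x = 1 := by
  have : x * (x - 1) = 0 := by linarith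
  rcases mul_eq_zero.mp this with h | h <;> omega

/-- Six integers whose sum equals their sum of squares are all `0` or `1`. -/
lemma six_aux (a b c d e f : ℤ)
    (h : a * a + b * b + c * c + d * d + e * e + f * f = a + b + c + d + e + f) :
    (a = 0 ∨ a = 1) ∧ (b = 0 ∨ b = 1) ∧ (c = 0 ∨ c = 1) ∧ (d = 0 ∨ d = 1) ∧
      (e = 0 ∨ e = 1) ∧ (f = 0 ∨ f = 1) := by
  have ha := zero_one_aux a
  have hb := zero_one_aux b
  have hc := zero_one_aux c
  have hd := zero_one_aux d
  have he := zero_one_aux e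
  have hf := zero_one_aux f
  refine ⟨zero_one_eq _ ?_, zero_one_eq _ ?_, zero_one_eq _ ?_, zero_one_eq _ ?_,
    zero_one_eq _ ?_, zero_one_eq _ ?_⟩ <;> linarith

/-- Finite check over 0/1 vectors, in degree `0`. -/
lemma check_zero : ∀ v ∈ Fintype.piFinset (fun _ : Fin 6 => ({0, 1} : Finset ℤ)),
    v 0 + v 1 + v 2 + v 3 + v 4 + v 5 = 1 →
      (![0, v 0, v 1, v 2, v 3, v 4, v 5] : Fin 7 → ℤ) ∈ lineList := by decide +kernel

lemma check_one : ∀ v ∈ Fintype.piFinset (fun _ : Fin 6 => ({0, 1} : Finset ℤ)),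
    v 0 + v 1 + v 2 + v 3 + v 4 + v 5 = 2 →
      (![1, -v 0, -v 1, -v 2, -v 3, -v 4, -v 5] : Fin 7 → ℤ) ∈ lineList := by decide +kernel

lemma check_two : ∀ v ∈ Fintype.piFinset (fun _ : Fin 6 => ({0, 1} : Finset ℤ)),
    v 0 + v 1 + v 2 + v 3 + v 4 + v 5 = 5 →
      (![2, -v 0, -v 1, -v 2, -v 3, -v 4, -v 5] : Fin 7 → ℤ) ∈ lineList := by decide +kernel

lemma mem_pi_aux (a b c d e f : ℤ)
    (h : a * a + b * b + c * c + d * d + e * e + f * f = a + b + c + d + e + f) :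
    ![a, b, c, d, e, f] ∈ Fintype.piFinset (fun _ : Fin 6 => ({0, 1} : Finset ℤ)) := by
  obtain ⟨ha, hb, hc, hd, he, hf⟩ := six_aux a b c d e f h
  rw [Fintype.mem_piFinset]
  intro i
  rw [Finset.mem_insert, Finset.mem_singleton]
  fin_cases i
  exacts [ha, hb, hc, hd, he, hf]

lemma mem_lineList (L : Fin 7 → ℤ) (h : IsLine L) : L ∈ lineList := by
  obtain ⟨h1, h2⟩ := h
  have hL : L = ![L 0, L 1, L 2, L 3, L 4, L 5, L 6] := by
    funext i
    fin_cases i <;> rfl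
  have hK : B L K = L 0 * (-3) - L 1 * 1 - L 2 * 1 - L 3 * 1 - L 4 * 1 - L 5 * 1 - L 6 * 1 := rfl
  rw [hK] at h2
  unfold B at h1
  generalize L 0 = d at *
  generalize L 1 = a at *
  generalize L 2 = b at *
  generalize L 3 = c at *
  generalize L 4 = e at *
  generalize L 5 = f at *
  generalize L 6 = g at *
  subst hL
  have hs : a + b + c + e + f + g = 1 - 3 * d := by linarith
  have hq : (1 - 3 * d) * (1 - 3 * d) ≤ 6 * (d * d + 1) := by
    rw [← hs]
    nlinarith [sq_nonneg (a - b), sq_nonneg (a - c), sq_nonneg (a - e), sq_nonneg (a - f),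
      sq_nonneg (a - g), sq_nonneg (b - c), sq_nonneg (b - e), sq_nonneg (b - f),
      sq_nonneg (b - g), sq_nonneg (c - e), sq_nonneg (c - f), sq_nonneg (c - g),
      sq_nonneg (e - f), sq_nonneg (e - g), sq_nonneg (f - g)]
  have hd0 : 0 ≤ d := by
    by_contra hneg
    nlinarith
  have hd2 : d ≤ 2 := by
    by_contra hneg
    nlinarith
  obtain rfl | rfl | rfl : d = 0 ∨ d = 1 ∨ d = 2 := by omega
  · exact check_zero _ (mem_pi_aux a b c e f g (by linarith))
      (show a + b + c + e + f + g = 1 by linarith)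
  · have := check_one _ (mem_pi_aux (-a) (-b) (-c) (-e) (-f) (-g) (by linarith))
      (show -a + -b + -c + -e + -f + -g = 2 by linarith)
    simpa using this
  · have := check_two _ (mem_pi_aux (-a) (-b) (-c) (-e) (-f) (-g) (by linarith))
      (show -a + -b + -c + -e + -f + -g = 5 by linarith)
    simpa using this

/-- There are exactly 27 lines. -/
theorem twentyseven_lines :
    {L : Fin 7 → ℤ | IsLine L}.Finite ∧ {L : Fin 7 → ℤ | IsLine L}.ncard = 27 := by
  have h : {L : Fin 7 → ℤ | IsLine L} = (lineList : Set (Fin 7 → ℤ)) := by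
    ext L
    exact ⟨fun hL => mem_lineList L hL, fun hL => lineList_isLine L hL⟩
  rw [h]
  exact ⟨lineList.finite_toSet, by rw [Set.ncard_coe_finset, lineList_card]⟩
end

section
/- There are exactly 45 triangles: the set of 3-element subsets {L₁, L₂, L₃} of pairwise distinct lines with L₁ + L₂ + L₃ = −K is finite and has cardinality 45. -/
/-- A triangle is a 3-element set of (pairwise distinct) lines summing to `-K`. -/
def IsTriangle (T : Finset (Fin 7 → ℤ)) : Prop :=
  T.card = 3 ∧ (∀ L ∈ T, IsLine L) ∧ ∑ L ∈ T, L = -K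

/-- The 27 lines, listed explicitly. -/
def lineVec : Fin 27 → Fin 7 → ℤ :=
  ![![0, 1, 0, 0, 0, 0, 0], ![0, 0, 1, 0, 0, 0, 0], ![0, 0, 0, 1, 0, 0, 0],
    ![0, 0, 0, 0, 1, 0, 0], ![0, 0, 0, 0, 0, 1, 0], ![0, 0, 0, 0, 0, 0, 1],
    ![1, -1, -1, 0, 0, 0, 0], ![1, -1, 0, -1, 0, 0, 0], ![1, -1, 0, 0, -1, 0, 0],
    ![1, -1, 0, 0, 0, -1, 0], ![1, -1, 0, 0, 0, 0, -1], ![1, 0, -1, -1, 0, 0, 0],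
    ![1, 0, -1, 0, -1, 0, 0], ![1, 0, -1, 0, 0, -1, 0], ![1, 0, -1, 0, 0, 0, -1],
    ![1, 0, 0, -1, -1, 0, 0], ![1, 0, 0, -1, 0, -1, 0], ![1, 0, 0, -1, 0, 0, -1],
    ![1, 0, 0, 0, -1, -1, 0], ![1, 0, 0, 0, -1, 0, -1], ![1, 0, 0, 0, 0, -1, -1],
    ![2, 0, -1, -1, -1, -1, -1], ![2, -1, 0, -1, -1, -1, -1], ![2, -1, -1, 0, -1, -1, -1],
    ![2, -1, -1, -1, 0, -1, -1], ![2, -1, -1, -1, -1, 0, -1], ![2, -1, -1, -1, -1, -1, 0]]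

theorem lineVec_injective : Function.Injective lineVec := by
  have h : ∀ i j, lineVec i = lineVec j → i = j := by decide +kernel
  exact fun i j => h i j

theorem lineVec_isLine (i : Fin 27) : IsLine (lineVec i) := by
  have h : ∀ i, B (lineVec i) (lineVec i) = -1 ∧ B (lineVec i) K = -1 := by decide +kernel
  exact h i

theorem small_cases : ∀ a ∈ [(0 : ℤ), 1, 2], ∀ b₁ ∈ [(-1 : ℤ), 0, 1], ∀ b₂ ∈ [(-1 : ℤ), 0, 1],
    ∀ b₃ ∈ [(-1 : ℤ), 0, 1], ∀ b₄ ∈ [(-1 : ℤ), 0, 1], ∀ b₅ ∈ [(-1 : ℤ), 0, 1],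
    ∀ b₆ ∈ [(-1 : ℤ), 0, 1], b₁ + b₂ + b₃ + b₄ + b₅ + b₆ = 1 - 3 * a →
    b₁ * b₁ + b₂ * b₂ + b₃ * b₃ + b₄ * b₄ + b₅ * b₅ + b₆ * b₆ = a * a + 1 →
    ∃ i, lineVec i = ![a, b₁, b₂, b₃, b₄, b₅, b₆] := by
  decide +kernel

theorem sq_add_self_nonneg (x : ℤ) : 0 ≤ x * x + x := by
  rcases le_or_gt 0 x with h | h <;> nlinarith

theorem mem_of_sq_add_self (x : ℤ) (h : x * x + x ≤ 0) : x ∈ [(-1 : ℤ), 0, 1] := by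
  have h1 : -1 ≤ x := by nlinarith
  have h2 : x ≤ 0 := by nlinarith
  simp; omega

theorem mem_of_sq_sub_self (x : ℤ) (h : x * x - x ≤ 0) : x ∈ [(-1 : ℤ), 0, 1] := by
  have h1 : 0 ≤ x := by nlinarith
  have h2 : x ≤ 1 := by nlinarith
  simp; omega

theorem exists_lineVec (L : Fin 7 → ℤ) (hL : IsLine L) : ∃ i, lineVec i = L := by
  obtain ⟨h1, h2⟩ := hL
  have hL : L = ![L 0, L 1, L 2, L 3, L 4, L 5, L 6] := by
    ext i; fin_cases i <;> rfl
  simp only [B] at h1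
  have h2' : L 0 * (-3) - L 1 * 1 - L 2 * 1 - L 3 * 1 - L 4 * 1 - L 5 * 1 - L 6 * 1 = -1 := h2
  rw [hL]
  generalize L 0 = a at *
  generalize L 1 = b₁ at *
  generalize L 2 = b₂ at *
  generalize L 3 = b₃ at *
  generalize L 4 = b₄ at *
  generalize L 5 = b₅ at *
  generalize L 6 = b₆ at *
  clear hL h2
  have hs : b₁ + b₂ + b₃ + b₄ + b₅ + b₆ = 1 - 3 * a := by linarith
  have hq : b₁ * b₁ + b₂ * b₂ + b₃ * b₃ + b₄ * b₄ + b₅ * b₅ + b₆ * b₆ = a * a + 1 := by linarith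
  have hcs : (b₁ + b₂ + b₃ + b₄ + b₅ + b₆) ^ 2 ≤
      6 * (b₁ * b₁ + b₂ * b₂ + b₃ * b₃ + b₄ * b₄ + b₅ * b₅ + b₆ * b₆) := by
    linarith [sq_nonneg (b₁ - b₂), sq_nonneg (b₁ - b₃), sq_nonneg (b₁ - b₄), sq_nonneg (b₁ - b₅),
      sq_nonneg (b₁ - b₆), sq_nonneg (b₂ - b₃), sq_nonneg (b₂ - b₄), sq_nonneg (b₂ - b₅),
      sq_nonneg (b₂ - b₆), sq_nonneg (b₃ - b₄), sq_nonneg (b₃ - b₅), sq_nonneg (b₃ - b₆),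
      sq_nonneg (b₄ - b₅), sq_nonneg (b₄ - b₆), sq_nonneg (b₅ - b₆)]
  rw [hs, hq] at hcs
  have ha0 : 0 ≤ a := by nlinarith
  have ha2 : a ≤ 2 := by nlinarith
  have key : b₁ ∈ [(-1 : ℤ), 0, 1] ∧ b₂ ∈ [(-1 : ℤ), 0, 1] ∧ b₃ ∈ [(-1 : ℤ), 0, 1] ∧
      b₄ ∈ [(-1 : ℤ), 0, 1] ∧ b₅ ∈ [(-1 : ℤ), 0, 1] ∧ b₆ ∈ [(-1 : ℤ), 0, 1] := by
    rcases eq_or_lt_of_le ha0 with h | h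
    · subst h
      have n (x : ℤ) : 0 ≤ x * x - x := by have := sq_add_self_nonneg (-x); linarith
      have := n b₁; have := n b₂; have := n b₃; have := n b₄; have := n b₅; have := n b₆
      refine ⟨?_, ?_, ?_, ?_, ?_, ?_⟩ <;> apply mem_of_sq_sub_self <;> linarith
    · have hle : a * a + 1 + (1 - 3 * a) ≤ 0 := by nlinarith
      have n := sq_add_self_nonneg
      have := n b₁; have := n b₂; have := n b₃; have := n b₄; have := n b₅; have := n b₆
      refine ⟨?_, ?_, ?_, ?_, ?_, ?_⟩ <;> apply mem_of_sq_add_self <;> linarith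
  obtain ⟨k1, k2, k3, k4, k5, k6⟩ := key
  exact small_cases a (by simp; omega) b₁ k1 b₂ k2 b₃ k3 b₄ k4 b₅ k5 b₆ k6 hs hq

/-- Index sets of triangles. -/
def triIdx : Finset (Finset (Fin 27)) :=
  (Finset.powersetCard 3 Finset.univ).filter (fun S => ∑ i ∈ S, lineVec i = -K)

theorem card_triIdx : triIdx.card = 45 := by
  decide +kernel

theorem triangles_eq : {T : Finset (Fin 7 → ℤ) | IsTriangle T} =
    ((triIdx.map (Finset.mapEmbedding ⟨lineVec, lineVec_injective⟩).toEmbedding :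
      Finset (Finset (Fin 7 → ℤ))) : Set (Finset (Fin 7 → ℤ))) := by
  ext T
  simp only [Set.mem_ofPred_eq, Finset.coe_map, Set.mem_image, Finset.mem_coe, triIdx,
    Finset.mem_filter, Finset.mem_powersetCard]
  constructor
  · rintro ⟨h3, hl, hs⟩
    have hT : T = (Finset.univ.filter (fun i => lineVec i ∈ T)).map
        ⟨lineVec, lineVec_injective⟩ := by
      ext L
      simp only [Finset.mem_map, Finset.mem_filter, Finset.mem_univ, true_and,
        Function.Embedding.coeFn_mk]
      constructor
      · intro h
        obtain ⟨i, rfl⟩ := exists_lineVec L (hl L h)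
        exact ⟨i, h, rfl⟩
      · rintro ⟨i, h, rfl⟩
        exact h
    refine ⟨Finset.univ.filter (fun i => lineVec i ∈ T), ⟨⟨Finset.subset_univ _, ?_⟩, ?_⟩, ?_⟩
    · rw [hT, Finset.card_map] at h3
      exact h3
    · rw [hT, Finset.sum_map] at hs
      exact hs
    · exact hT.symm
  · rintro ⟨S, ⟨⟨-, h3⟩, hs⟩, rfl⟩
    refine ⟨?_, ?_, ?_⟩
    · exact (Finset.card_map _).trans h3
    · intro L hL
      obtain ⟨i, -, rfl⟩ := Finset.mem_map.1 hL
      exact lineVec_isLine i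
    · exact (Finset.sum_map _ _ _).trans hs

/-- There are exactly 45 triangles. -/
theorem fortyfive_triangles :
    {T : Finset (Fin 7 → ℤ) | IsTriangle T}.Finite ∧
      {T : Finset (Fin 7 → ℤ) | IsTriangle T}.ncard = 45 := by
  rw [triangles_eq]
  refine ⟨Finset.finite_toSet _, ?_⟩
  rw [Set.ncard_coe_finset, Finset.card_map, card_triIdx]
end

section
/- Every line belongs to exactly 5 triangles: for each vector L ∈ (Fin 7 → ℤ) with ⟨L,L⟩ = −1 and ⟨L,K⟩ = −1, the set of triangles containing L has cardinality 5. -/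
/-- The 27 lines. -/
def lineSet : Finset (Fin 7 → ℤ) :=
  (Finset.univ.image fun j : Fin 6 => Fin.cons 0 fun i => if i = j then 1 else 0) ∪
  (Finset.univ.image fun j : Fin 6 => Fin.cons 2 fun i => if i = j then 0 else -1) ∪
  (((Finset.univ : Finset (Fin 6 × Fin 6)).filter fun p => p.1 < p.2).image
    fun p => Fin.cons 1 fun i => if i = p.1 ∨ i = p.2 then -1 else 0)

/-- Vectors with bounded coordinates, built from a subset of the six points. -/
def cand (d e : ℤ) (b : Fin 6 → Bool) : Fin 7 → ℤ :=
  Fin.cons d fun i => if b i then e else 0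

instance (L : Fin 7 → ℤ) : Decidable (IsLine L) := by unfold IsLine; infer_instance

lemma cand_mem : ∀ b : Fin 6 → Bool,
    (IsLine (cand 0 1 b) → cand 0 1 b ∈ lineSet) ∧
    (IsLine (cand 1 (-1) b) → cand 1 (-1) b ∈ lineSet) ∧
    (IsLine (cand 2 (-1) b) → cand 2 (-1) b ∈ lineSet) := by
  decide +kernel

lemma eq_cand (L : Fin 7 → ℤ) (d e : ℤ) (h0 : L 0 = d)
    (h : ∀ i : Fin 6, L i.succ = e ∨ L i.succ = 0) :
    ∃ b, L = cand d e b := by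
  refine ⟨fun i => decide (L i.succ = e), ?_⟩
  funext i
  refine Fin.cases ?_ (fun j => ?_) i
  · simpa [cand] using h0
  · rcases h j with h | h
    · simp [cand, h]
    · simp only [cand, Fin.cons_succ, h]
      split_ifs with hh <;> simp_all

lemma mul_pred_nonneg (m : ℤ) : 0 ≤ m * (m - 1) := by
  rcases le_or_gt m 0 with h | h <;> nlinarith

lemma mul_succ_nonneg (m : ℤ) : 0 ≤ m * (m + 1) := by
  rcases lt_or_ge m 0 with h | h <;> nlinarith

lemma mem_lineSet_of (L : Fin 7 → ℤ) (hL : IsLine L) : L ∈ lineSet := by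
  have hL' := hL
  obtain ⟨h1, h2⟩ := hL'
  have hK : B L K = -3 * L 0 - L 1 - L 2 - L 3 - L 4 - L 5 - L 6 := by
    simp [B, K]; ring
  rw [hK] at h2
  unfold B at h1
  have hs : L 1 = 1 - 3 * L 0 - L 2 - L 3 - L 4 - L 5 - L 6 := by linarith
  have key : 3 * (L 0 * L 0) - 6 * L 0 - 5 ≤ 0 := by
    have hsum : L 1 + L 2 + L 3 + L 4 + L 5 + L 6 = 1 - 3 * L 0 := by linarith
    have hc : (L 1 + L 2 + L 3 + L 4 + L 5 + L 6) ^ 2 ≤ 6 * (L 1 * L 1 + L 2 * L 2 + L 3 * L 3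
        + L 4 * L 4 + L 5 * L 5 + L 6 * L 6) := by
      nlinarith [sq_nonneg (L 1 - L 2), sq_nonneg (L 1 - L 3), sq_nonneg (L 1 - L 4),
        sq_nonneg (L 1 - L 5), sq_nonneg (L 1 - L 6), sq_nonneg (L 2 - L 3), sq_nonneg (L 2 - L 4),
        sq_nonneg (L 2 - L 5), sq_nonneg (L 2 - L 6), sq_nonneg (L 3 - L 4), sq_nonneg (L 3 - L 5),
        sq_nonneg (L 3 - L 6), sq_nonneg (L 4 - L 5), sq_nonneg (L 4 - L 6), sq_nonneg (L 5 - L 6)]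
    rw [hsum] at hc
    nlinarith
  have hlo : 0 ≤ L 0 := by by_contra hh; nlinarith
  have hhi : L 0 ≤ 2 := by by_contra hh; nlinarith
  have hd : L 0 = 0 ∨ L 0 = 1 ∨ L 0 = 2 := by omega
  have hp := fun i => mul_pred_nonneg (L i)
  have hq := fun i => mul_succ_nonneg (L i)
  have aux : (L 0 = 0 → ∀ i : Fin 6, L i.succ = 1 ∨ L i.succ = 0) ∧
      ((L 0 = 1 ∨ L 0 = 2) → ∀ i : Fin 6, L i.succ = -1 ∨ L i.succ = 0) := by
    constructor
    · intro h i
      rw [h] at h1 h2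
      have : L i.succ * (L i.succ - 1) = 0 := by
        have a1 := hp 1
        have a2 := hp 2
        have a3 := hp 3
        have a4 := hp 4
        have a5 := hp 5
        have a6 := hp 6
        fin_cases i
        exacts [(by linarith : L 1 * (L 1 - 1) = 0),
          (by linarith : L 2 * (L 2 - 1) = 0),
          (by linarith : L 3 * (L 3 - 1) = 0),
          (by linarith : L 4 * (L 4 - 1) = 0),
          (by linarith : L 5 * (L 5 - 1) = 0),
          (by linarith : L 6 * (L 6 - 1) = 0)]
      rcases mul_eq_zero.1 this with h | h
      · exact Or.inr h
      · left; omega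
    · intro h i
      have : L i.succ * (L i.succ + 1) = 0 := by
        have a1 := hq 1
        have a2 := hq 2
        have a3 := hq 3
        have a4 := hq 4
        have a5 := hq 5
        have a6 := hq 6
        have h12 : L 0 * L 0 + 1 = 3 * L 0 - 1 := by rcases h with h | h <;> rw [h] <;> norm_num
        fin_cases i
        exacts [(by linarith : L 1 * (L 1 + 1) = 0),
          (by linarith : L 2 * (L 2 + 1) = 0),
          (by linarith : L 3 * (L 3 + 1) = 0),
          (by linarith : L 4 * (L 4 + 1) = 0),
          (by linarith : L 5 * (L 5 + 1) = 0),
          (by linarith : L 6 * (L 6 + 1) = 0)]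
      rcases mul_eq_zero.1 this with h | h
      · exact Or.inr h
      · left; omega
  rcases hd with h | h | h
  · obtain ⟨b, rfl⟩ := eq_cand L 0 1 h (aux.1 h)
    exact (cand_mem b).1 hL
  · obtain ⟨b, rfl⟩ := eq_cand L 1 (-1) h (aux.2 (Or.inl h))
    exact (cand_mem b).2.1 hL
  · obtain ⟨b, rfl⟩ := eq_cand L 2 (-1) h (aux.2 (Or.inr h))
    exact (cand_mem b).2.2 hL

/-- Second vertices of the triangles through `L`. -/
def seconds (L : Fin 7 → ℤ) : Finset (Fin 7 → ℤ) :=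
  lineSet.filter fun M => IsLine M ∧ IsLine (-K - L - M) ∧ L ≠ M ∧ L ≠ -K - L - M ∧ M ≠ -K - L - M

/-- The triangles through `L`. -/
def triangles (L : Fin 7 → ℤ) : Finset (Finset (Fin 7 → ℤ)) :=
  (seconds L).image fun M => {L, M, -K - L - M}

lemma card_triangles : ∀ L ∈ lineSet, (triangles L).card = 5 := by
  decide +kernel

lemma third {x y z : Fin 7 → ℤ} (h : x + (y + z) = -K) : z = -K - x - y := by
  rw [← h]; abel

lemma mem_triangles (L : Fin 7 → ℤ) (hL : IsLine L) (T : Finset (Fin 7 → ℤ)) :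
    T ∈ triangles L ↔ IsTriangle T ∧ L ∈ T := by
  constructor
  · intro h
    obtain ⟨M, hM, rfl⟩ := Finset.mem_image.1 h
    obtain ⟨-, h1, h2, h3, h4, h5⟩ := Finset.mem_filter.1 hM
    refine ⟨⟨Finset.card_eq_three.2 ⟨_, _, _, h3, h4, h5, rfl⟩, ?_, ?_⟩, by simp⟩
    · intro N hN
      simp only [Finset.mem_insert, Finset.mem_singleton] at hN
      rcases hN with rfl | rfl | rfl <;> assumption
    · rw [Finset.sum_insert (by simp [h3, h4]), Finset.sum_insert (by simpa using h5),
        Finset.sum_singleton]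
      abel
  · rintro ⟨⟨hc, hl, hs⟩, hLT⟩
    have hc2 : (T.erase L).card = 2 := by rw [Finset.card_erase_of_mem hLT, hc]
    obtain ⟨M, N, hMN, hT⟩ := Finset.card_eq_two.1 hc2
    have hM : M ∈ T.erase L := by simp [hT]
    have hN : N ∈ T.erase L := by simp [hT]
    rw [Finset.mem_erase] at hM hN
    rw [← Finset.add_sum_erase _ _ hLT, hT, Finset.sum_pair hMN] at hs
    have hN' := third hs
    refine Finset.mem_image.2 ⟨M, Finset.mem_filter.2 ⟨mem_lineSet_of M (hl M hM.2), hl M hM.2, ?_⟩, ?_⟩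
    · rw [← hN']
      exact ⟨hl N hN.2, hM.1.symm, hN.1.symm, hMN⟩
    · rw [← hN', ← hT, Finset.insert_erase hLT]

/-- Every line belongs to exactly 5 triangles. -/
theorem five_triangles_through_each_line (L : Fin 7 → ℤ) (hL : IsLine L) :
    {T : Finset (Fin 7 → ℤ) | IsTriangle T ∧ L ∈ T}.Finite ∧
      {T : Finset (Fin 7 → ℤ) | IsTriangle T ∧ L ∈ T}.ncard = 5 := by
  have h : {T : Finset (Fin 7 → ℤ) | IsTriangle T ∧ L ∈ T} = ↑(triangles L) := by
    ext T
    simp [mem_triangles L hL]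
  rw [h]
  exact ⟨Finset.finite_toSet _, by rw [Set.ncard_coe_finset, card_triangles L (mem_lineSet_of L hL)]⟩
end

section
/- Let 𝒱 be the ℚ-vector space of functions from the set of lines to ℚ, and for each triangle T let χ_T ∈ 𝒱 be its indicator function (value 1 at each of the three lines of T and 0 at every other line). The ℚ-linear span of the 45 vectors χ_T, as T ranges over all triangles, is a subspace of 𝒱 of dimension exactly 21. -/
/-- The ℚ-vector space of functions from the set of lines to ℚ. -/
abbrev Vq : Type := {L : Fin 7 → ℤ // IsLine L} → ℚ

/-- The indicator function of a triangle: value 1 at each of its lines, 0 elsewhere. -/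
def chi (T : Finset (Fin 7 → ℤ)) : Vq :=
  fun L => if (L : Fin 7 → ℤ) ∈ T then 1 else 0

/-- The 27 lines. -/
def ln : Fin 27 → Fin 7 → ℤ := ![
  ![0, 1, 0, 0, 0, 0, 0],
  ![0, 0, 1, 0, 0, 0, 0],
  ![0, 0, 0, 1, 0, 0, 0],
  ![0, 0, 0, 0, 1, 0, 0],
  ![0, 0, 0, 0, 0, 1, 0],
  ![0, 0, 0, 0, 0, 0, 1],
  ![2, 0, -1, -1, -1, -1, -1],
  ![2, -1, 0, -1, -1, -1, -1],
  ![2, -1, -1, 0, -1, -1, -1],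
  ![2, -1, -1, -1, 0, -1, -1],
  ![2, -1, -1, -1, -1, 0, -1],
  ![2, -1, -1, -1, -1, -1, 0],
  ![1, -1, -1, 0, 0, 0, 0],
  ![1, -1, 0, -1, 0, 0, 0],
  ![1, -1, 0, 0, -1, 0, 0],
  ![1, -1, 0, 0, 0, -1, 0],
  ![1, -1, 0, 0, 0, 0, -1],
  ![1, 0, -1, -1, 0, 0, 0],
  ![1, 0, -1, 0, -1, 0, 0],
  ![1, 0, -1, 0, 0, -1, 0],
  ![1, 0, -1, 0, 0, 0, -1],
  ![1, 0, 0, -1, -1, 0, 0],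
  ![1, 0, 0, -1, 0, -1, 0],
  ![1, 0, 0, -1, 0, 0, -1],
  ![1, 0, 0, 0, -1, -1, 0],
  ![1, 0, 0, 0, -1, 0, -1],
  ![1, 0, 0, 0, 0, -1, -1]]

/-- The 45 triangles, by indices of lines. -/
def tri : Fin 45 → Fin 3 → Fin 27 := ![
  ![0, 7, 12],
  ![0, 8, 13],
  ![0, 9, 14],
  ![0, 10, 15],
  ![0, 11, 16],
  ![1, 6, 12],
  ![1, 8, 17],
  ![1, 9, 18],
  ![1, 10, 19],
  ![1, 11, 20],
  ![2, 6, 13],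
  ![2, 7, 17],
  ![2, 9, 21],
  ![2, 10, 22],
  ![2, 11, 23],
  ![3, 6, 14],
  ![3, 7, 18],
  ![3, 8, 21],
  ![3, 10, 24],
  ![3, 11, 25],
  ![4, 6, 15],
  ![4, 7, 19],
  ![4, 8, 22],
  ![4, 9, 24],
  ![4, 11, 26],
  ![5, 6, 16],
  ![5, 7, 20],
  ![5, 8, 23],
  ![5, 9, 25],
  ![5, 10, 26],
  ![12, 21, 26],
  ![12, 22, 25],
  ![12, 23, 24],
  ![13, 18, 26],
  ![13, 19, 25],
  ![13, 20, 24],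
  ![14, 17, 26],
  ![14, 19, 23],
  ![14, 20, 22],
  ![15, 17, 25],
  ![15, 18, 23],
  ![15, 20, 21],
  ![16, 17, 24],
  ![16, 18, 22],
  ![16, 19, 21]]

def inc (t : Fin 45) (i : Fin 27) : ℤ := if i = tri t 0 ∨ i = tri t 1 ∨ i = tri t 2 then 1 else 0

theorem ln_line : ∀ i, IsLine (ln i) := by decide +kernel

theorem ln_inj : Function.Injective ln := by
  have : ∀ i j, ln i = ln j → i = j := by decide +kernel
  exact fun i j h => this i j h

theorem gram : ∀ i j, ∑ t, inc t i * inc t j = 6 * (if i = j then 1 else 0) + B (ln i) (ln j) := by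
  decide +kernel

theorem inc_deg : ∀ i, ∑ t, inc t i = 5 := by decide +kernel

theorem tri_inj : ∀ t, tri t 0 ≠ tri t 1 ∧ tri t 0 ≠ tri t 2 ∧ tri t 1 ≠ tri t 2 := by
  decide +kernel

theorem tri_sum : ∀ t, ln (tri t 0) + (ln (tri t 1) + ln (tri t 2)) = -K := by decide +kernel

theorem class0 : ∀ v : Fin 6 → Fin 2, (∑ k, (v k : ℤ)) = 1 →
    ∃ i, ln i = Fin.cons 0 (fun k => (v k : ℤ)) := by decide +kernel
theorem class1 : ∀ v : Fin 6 → Fin 2, (∑ k, (v k : ℤ)) = 2 →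
    ∃ i, ln i = Fin.cons 1 (fun k => -(v k : ℤ)) := by decide +kernel
theorem class2 : ∀ v : Fin 6 → Fin 2, (∑ k, (v k : ℤ)) = 5 →
    ∃ i, ln i = Fin.cons 2 (fun k => -(v k : ℤ)) := by decide +kernel

theorem int_nn (x : ℤ) : 0 ≤ x * (x - 1) := by
  rcases le_or_gt x 0 with h | h
  · nlinarith
  · nlinarith

/-- An integer vector with equal sum and sum of squares is a 0/1 vector. -/
theorem zero_one (u : Fin 6 → ℤ) (h : ∑ k, u k * (u k - 1) = 0) :
    ∃ v : Fin 6 → Fin 2, ∀ k, u k = (v k : ℤ) := by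
  have h1 := (Finset.sum_eq_zero_iff_of_nonneg (fun k _ => int_nn (u k))).1 h
  have : ∀ k, ∃ w : Fin 2, u k = (w : ℤ) := by
    intro k
    rcases mul_eq_zero.1 (h1 k (Finset.mem_univ k)) with h2 | h2
    · exact ⟨0, by simpa using h2⟩
    · exact ⟨1, by simp; linarith⟩
  choose v hv using this
  exact ⟨v, hv⟩

theorem ln_surj (L : Fin 7 → ℤ) (h : IsLine L) : ∃ i, ln i = L := by
  obtain ⟨a, u, rfl⟩ : ∃ a u, L = Fin.cons a u := ⟨L 0, Fin.tail L, (Fin.cons_self_tail L).symm⟩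
  obtain ⟨h1, h2⟩ := h
  have e1 : a * a - ∑ k, u k * u k = -1 := by
    rw [← h1]; simp only [Fin.sum_univ_six, B]
    change _ = a * a - u 0 * u 0 - u 1 * u 1 - u 2 * u 2 - u 3 * u 3 - u 4 * u 4 - u 5 * u 5
    ring
  have e2 : -3 * a - ∑ k, u k = -1 := by
    rw [← h2]; simp only [Fin.sum_univ_six, B]
    change _ = a * (-3) - u 0 * 1 - u 1 * 1 - u 2 * 1 - u 3 * 1 - u 4 * 1 - u 5 * 1
    ring
  have cs : (∑ k, u k) ^ 2 ≤ 6 * ∑ k, u k * u k := by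
    have := sq_sum_le_card_mul_sum_sq (s := Finset.univ) (f := u)
    simpa [sq] using this
  have e3 : ∑ k, u k * u k = a * a + 1 := by linarith
  have e4 : ∑ k, u k = 1 - 3 * a := by linarith
  rw [e3, e4] at cs
  have a0 : 0 ≤ a := by nlinarith
  have a2 : a ≤ 2 := by nlinarith
  have key : ∀ s : ℤ, ∑ k, (s * u k) * (s * u k - 1) = s * s * (a * a + 1) - s * (1 - 3 * a) := by
    intro s
    rw [← e3, ← e4, Finset.mul_sum, Finset.mul_sum, ← Finset.sum_sub_distrib]
    exact Finset.sum_congr rfl fun k _ => by ring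
  interval_cases a
  · obtain ⟨v, hv⟩ := zero_one (fun k => 1 * u k) (by rw [key]; norm_num)
    have : u = fun k => (v k : ℤ) := by funext k; linarith [hv k]
    subst this
    exact class0 v (by linarith)
  · obtain ⟨v, hv⟩ := zero_one (fun k => -1 * u k) (by rw [key]; norm_num)
    have : u = fun k => -(v k : ℤ) := by funext k; linarith [hv k]
    subst this
    exact class1 v (by rw [Finset.sum_neg_distrib] at e4; linarith)
  · obtain ⟨v, hv⟩ := zero_one (fun k => -1 * u k) (by rw [key]; norm_num)
    have : u = fun k => -(v k : ℤ) := by funext k; linarith [hv k]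
    subst this
    exact class2 v (by rw [Finset.sum_neg_distrib] at e4; linarith)

noncomputable def eqv : Fin 27 ≃ {L : Fin 7 → ℤ // IsLine L} :=
  Equiv.ofBijective (fun i => ⟨ln i, ln_line i⟩)
    ⟨fun _ _ h => ln_inj (congrArg Subtype.val h),
      fun L => (ln_surj L.1 L.2).imp fun _ h => Subtype.ext h⟩

theorem eqv_val (i : Fin 27) : (eqv i : Fin 7 → ℤ) = ln i := rfl

/-- The six linear conditions: `∑ f(L) L` is a multiple of `K`. -/
noncomputable def Phi : Vq →ₗ[ℚ] (Fin 6 → ℚ) where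
  toFun f k := ∑ i, f (eqv i) * ((3 * ln i k.succ + ln i 0 : ℤ) : ℚ)
  map_add' f g := by
    funext k; simp only [Pi.add_apply, add_mul, Finset.sum_add_distrib]
  map_smul' c f := by
    funext k
    simp only [Pi.smul_apply, smul_eq_mul, RingHom.id_apply, Finset.mul_sum, mul_assoc]

theorem Phi_apply (f : Vq) (k : Fin 6) :
    Phi f k = ∑ i, f (eqv i) * ((3 * ln i k.succ + ln i 0 : ℤ) : ℚ) := rfl

theorem ln_exc : ∀ k j : Fin 6, 3 * ln (Fin.castLE (by norm_num) j) k.succ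
    + ln (Fin.castLE (by norm_num) j) 0 = if k = j then 3 else 0 := by decide +kernel

theorem Phi_surj : Function.Surjective Phi := by
  rw [← LinearMap.range_eq_top, eq_top_iff, ← (Pi.basisFun ℚ (Fin 6)).span_eq, Submodule.span_le]
  rintro _ ⟨j, rfl⟩
  refine ⟨fun L => if L = eqv (Fin.castLE (by norm_num) j) then 1 / 3 else 0, ?_⟩
  funext k
  rw [Phi_apply]
  simp only [EmbeddingLike.apply_eq_iff_eq, ite_mul, zero_mul, Finset.sum_ite_eq',
    Finset.mem_univ, if_true, ln_exc, Pi.basisFun_apply, Pi.single_apply]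
  split_ifs <;> norm_num

theorem finrank_ker : Module.finrank ℚ (LinearMap.ker Phi) = 21 := by
  have : Fintype {L : Fin 7 → ℤ // IsLine L} := Fintype.ofEquiv _ eqv
  have h := LinearMap.finrank_range_add_finrank_ker Phi
  rw [LinearMap.range_eq_top.2 Phi_surj, finrank_top, Module.finrank_fintype_fun_eq_card,
    Module.finrank_fintype_fun_eq_card, Fintype.card_congr eqv.symm] at h
  simp only [Fintype.card_fin] at h
  omega

theorem sum_tri (T : Finset (Fin 7 → ℤ)) (hT : ∀ L ∈ T, IsLine L) (F : (Fin 7 → ℤ) → ℚ) :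
    ∑ i, chi T (eqv i) * F (ln i) = ∑ L ∈ T, F L := by
  have : T = (Finset.univ.filter (fun i => ln i ∈ T)).image ln := by
    ext L
    simp only [Finset.mem_image, Finset.mem_filter, Finset.mem_univ, true_and]
    constructor
    · intro h
      obtain ⟨i, rfl⟩ := ln_surj L (hT L h)
      exact ⟨i, h, rfl⟩
    · rintro ⟨i, h, rfl⟩
      exact h
  conv_rhs => rw [this]
  rw [Finset.sum_image (fun _ _ _ _ h => ln_inj h), Finset.sum_filter]
  refine Finset.sum_congr rfl fun i _ => ?_
  change (if ln i ∈ T then (1 : ℚ) else 0) * F (ln i) = _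
  split_ifs <;> simp

theorem K_rel : ∀ k : Fin 6, 3 * (-K) k.succ + (-K) 0 = 0 := by decide +kernel

theorem span_le_ker : Submodule.span ℚ (chi '' {T | IsTriangle T}) ≤ LinearMap.ker Phi := by
  rw [Submodule.span_le]
  rintro _ ⟨T, ⟨-, hl, hs⟩, rfl⟩
  rw [SetLike.mem_coe, LinearMap.mem_ker]
  funext k
  rw [Phi_apply, sum_tri T hl (fun L => ((3 * L k.succ + L 0 : ℤ) : ℚ)), ← Int.cast_sum,
    Finset.sum_add_distrib, ← Finset.mul_sum, ← Finset.sum_apply, ← Finset.sum_apply, hs, K_rel]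
  simp

/-- The triangle with index `t`. -/
def triSet (t : Fin 45) : Finset (Fin 7 → ℤ) := {ln (tri t 0), ln (tri t 1), ln (tri t 2)}

theorem triSet_isTriangle (t : Fin 45) : IsTriangle (triSet t) := by
  obtain ⟨h1, h2, h3⟩ := tri_inj t
  have h1' := ln_inj.ne h1
  have h2' := ln_inj.ne h2
  have h3' := ln_inj.ne h3
  refine ⟨Finset.card_eq_three.2 ⟨_, _, _, h1', h2', h3', rfl⟩, ?_, ?_⟩
  · intro L hL
    simp only [triSet, Finset.mem_insert, Finset.mem_singleton] at hL
    rcases hL with rfl | rfl | rfl <;> exact ln_line _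
  · rw [triSet, Finset.sum_insert (by simp [h1', h2']), Finset.sum_pair h3', tri_sum]

theorem chi_triSet (t : Fin 45) (i : Fin 27) : chi (triSet t) (eqv i) = (inc t i : ℚ) := by
  simp only [chi, eqv_val, triSet, inc, Finset.mem_insert, Finset.mem_singleton, ln_inj.eq_iff]
  split_ifs <;> simp

theorem B_K (i : Fin 27) : (3 * ln i 0 + ln i 1 + ln i 2 + ln i 3 + ln i 4 + ln i 5 + ln i 6) = 1 := by
  revert i; decide +kernel

theorem ker_le_span : LinearMap.ker Phi ≤ Submodule.span ℚ (chi '' {T | IsTriangle T}) := by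
  intro f hf
  rw [LinearMap.mem_ker] at hf
  set x : Fin 7 → ℚ := fun k => ∑ j, f (eqv j) * (ln j k : ℚ) with hx
  have hxk : ∀ k : Fin 6, 3 * x k.succ + x 0 = 0 := by
    intro k
    have := congrFun hf k
    rw [Phi_apply] at this
    rw [hx, Finset.mul_sum, ← Finset.sum_add_distrib]
    rw [Pi.zero_apply] at this
    rw [← this]
    refine Finset.sum_congr rfl fun j _ => ?_
    push_cast; ring
  have hB : ∀ i, ∑ j, f (eqv j) * (B (ln i) (ln j) : ℚ) = x 0 / 3 := by
    intro i
    have e : ∑ j, f (eqv j) * (B (ln i) (ln j) : ℚ) = ln i 0 * x 0 - ln i 1 * x 1 - ln i 2 * x 2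
        - ln i 3 * x 3 - ln i 4 * x 4 - ln i 5 * x 5 - ln i 6 * x 6 := by
      simp only [hx, Finset.mul_sum, ← Finset.sum_sub_distrib]
      refine Finset.sum_congr rfl fun j _ => ?_
      simp only [B]; push_cast; ring
    have k1 : x 1 = - x 0 / 3 := by linarith [show 3 * x 1 + x 0 = 0 from hxk 0]
    have k2 : x 2 = - x 0 / 3 := by linarith [show 3 * x 2 + x 0 = 0 from hxk 1]
    have k3 : x 3 = - x 0 / 3 := by linarith [show 3 * x 3 + x 0 = 0 from hxk 2]
    have k4 : x 4 = - x 0 / 3 := by linarith [show 3 * x 4 + x 0 = 0 from hxk 3]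
    have k5 : x 5 = - x 0 / 3 := by linarith [show 3 * x 5 + x 0 = 0 from hxk 4]
    have k6 : x 6 = - x 0 / 3 := by linarith [show 3 * x 6 + x 0 = 0 from hxk 5]
    rw [e, k1, k2, k3, k4, k5, k6]
    have hK : (3 * ln i 0 + ln i 1 + ln i 2 + ln i 3 + ln i 4 + ln i 5 + ln i 6 : ℚ) = 1 := by
      exact_mod_cast B_K i
    linear_combination x 0 / 3 * hK
  have hfe : f = ∑ t, ((∑ j, (inc t j : ℚ) * f (eqv j)) / 6 - x 0 / 90) • chi (triSet t) := by
    funext L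
    obtain ⟨i, rfl⟩ := eqv.surjective L
    simp only [Finset.sum_apply, Pi.smul_apply, smul_eq_mul, chi_triSet, sub_mul,
      Finset.sum_sub_distrib, ← Finset.mul_sum]
    have d : ∑ t, (inc t i : ℚ) = 5 := by exact_mod_cast inc_deg i
    have g : ∀ j, ∑ t, (inc t i : ℚ) * inc t j = 6 * (if i = j then 1 else 0) + B (ln i) (ln j) := by
      intro j; exact_mod_cast gram i j
    have s : ∑ t, (∑ j, (inc t j : ℚ) * f (eqv j)) / 6 * (inc t i : ℚ)
        = (∑ j, f (eqv j) * ∑ t, (inc t i : ℚ) * inc t j) / 6 := by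
      simp only [Finset.sum_div, Finset.sum_mul, Finset.mul_sum]
      rw [Finset.sum_comm]
      refine Finset.sum_congr rfl fun j _ => Finset.sum_congr rfl fun t _ => ?_
      ring
    rw [s, d]
    simp only [g, mul_add, Finset.sum_add_distrib, hB]
    simp
    ring
  rw [hfe]
  exact Submodule.sum_mem _ fun t _ => Submodule.smul_mem _ _
    (Submodule.subset_span ⟨triSet t, triSet_isTriangle t, rfl⟩)

/-- The ℚ-linear span of the 45 indicator vectors of triangles has dimension 21. -/
theorem triangle_span_dim_21 :
    Module.finrank ℚ ↥(Submodule.span ℚ (chi '' {T | IsTriangle T})) = 21 := by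
  rw [le_antisymm span_le_ker ker_le_span, finrank_ker]
end

section
/- Let W be the group of ℤ-linear automorphisms g of V = (Fin 7 → ℤ) satisfying ⟨g x, g y⟩ = ⟨x, y⟩ for all x, y ∈ V and g K = K. Then W is a finite group of order 51840. -/
/-- The set of ℤ-linear automorphisms of the lattice preserving the form and fixing `K`:
the Weyl group of `E₆`. -/
def Wset : Set ((Fin 7 → ℤ) ≃ₗ[ℤ] (Fin 7 → ℤ)) :=
  {g | (∀ x y, B (g x) (g y) = B x y) ∧ g K = K}

def lineTab : List (Fin 7 → ℤ) :=
  [![0, 1, 0, 0, 0, 0, 0],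
   ![0, 0, 1, 0, 0, 0, 0],
   ![0, 0, 0, 1, 0, 0, 0],
   ![0, 0, 0, 0, 1, 0, 0],
   ![0, 0, 0, 0, 0, 1, 0],
   ![0, 0, 0, 0, 0, 0, 1],
   ![1, -1, -1, 0, 0, 0, 0],
   ![1, -1, 0, -1, 0, 0, 0],
   ![1, -1, 0, 0, -1, 0, 0],
   ![1, -1, 0, 0, 0, -1, 0],
   ![1, -1, 0, 0, 0, 0, -1],
   ![1, 0, -1, -1, 0, 0, 0],
   ![1, 0, -1, 0, -1, 0, 0],
   ![1, 0, -1, 0, 0, -1, 0],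
   ![1, 0, -1, 0, 0, 0, -1],
   ![1, 0, 0, -1, -1, 0, 0],
   ![1, 0, 0, -1, 0, -1, 0],
   ![1, 0, 0, -1, 0, 0, -1],
   ![1, 0, 0, 0, -1, -1, 0],
   ![1, 0, 0, 0, -1, 0, -1],
   ![1, 0, 0, 0, 0, -1, -1],
   ![2, -1, -1, -1, -1, -1, 0],
   ![2, -1, -1, -1, -1, 0, -1],
   ![2, -1, -1, -1, 0, -1, -1],
   ![2, -1, -1, 0, -1, -1, -1],
   ![2, -1, 0, -1, -1, -1, -1],
   ![2, 0, -1, -1, -1, -1, -1]]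
def maskTab : List ℕ :=
  [69204030, 35620797, 18642811, 9662199, 4906479, 2472927, 31489980, 48467834, 57448182, 62203374, 64635870, 82047225, 91023733, 95771245, 98188381, 107944371, 112634539, 114936987, 121221927, 123131159, 126838287, 130399200, 128638416, 125005512, 117208900, 100632450, 67106817]

/-- Lists of length `k` of pairwise related elements of `S`. -/
def enumT {α : Type*} (R : α → α → Bool) : ℕ → List α → List (List α)
  | 0, _ => [[]]
  | k + 1, S => S.flatMap fun a => (enumT R k (S.filter (R a))).map (List.cons a)

def cntT {α : Type*} (R : α → α → Bool) : ℕ → List α → ℕ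
  | 0, _ => 1
  | k + 1, S => (S.map fun a => cntT R k (S.filter (R a))).sum

theorem length_enumT {α : Type*} (R : α → α → Bool) (k : ℕ) (S : List α) :
    (enumT R k S).length = cntT R k S := by
  induction k generalizing S with
  | zero => rfl
  | succ k ih => simp [enumT, cntT, List.length_flatMap, ih]

theorem mem_enumT {α : Type*} (R : α → α → Bool) (k : ℕ) (S : List α) (l : List α) :
    l ∈ enumT R k S ↔ l.length = k ∧ l.Pairwise (fun a b => R a b = true) ∧ ∀ x ∈ l, x ∈ S := by
  induction k generalizing S l with
  | zero =>
    simp only [enumT, List.mem_singleton, List.length_eq_zero_iff]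
    constructor
    · rintro rfl; simp
    · exact fun h => h.1
  | succ k ih =>
    simp only [enumT, List.mem_flatMap, List.mem_map, ih]
    constructor
    · rintro ⟨a, ha, m, ⟨h1, h2, h3⟩, rfl⟩
      simp only [List.mem_filter] at h3
      refine ⟨by simp [h1], List.pairwise_cons.2 ⟨fun b hb => (h3 b hb).2, h2⟩, ?_⟩
      intro x hx
      rcases List.mem_cons.1 hx with rfl | hx
      · exact ha
      · exact (h3 x hx).1
    · rintro ⟨h1, h2, h3⟩
      cases l with
      | nil => simp at h1
      | cons a m =>
        rw [List.pairwise_cons] at h2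
        refine ⟨a, h3 a (by simp), m, ⟨by simpa using h1, h2.2, ?_⟩, rfl⟩
        intro x hx
        exact List.mem_filter.2 ⟨h3 x (by simp [hx]), h2.1 x hx⟩

theorem nodup_enumT {α : Type*} (R : α → α → Bool) (k : ℕ) (S : List α) (hS : S.Nodup) :
    (enumT R k S).Nodup := by
  induction k generalizing S with
  | zero => simp [enumT]
  | succ k ih =>
    rw [enumT, List.nodup_flatMap]
    refine ⟨fun a _ => (ih _ (hS.filter _)).map (List.cons_injective), ?_⟩
    refine List.Pairwise.imp ?_ hS
    intro a b hab
    simp only [Function.onFun]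
    intro l h1 h2
    simp only [List.mem_map] at h1 h2
    obtain ⟨_, _, rfl⟩ := h1
    obtain ⟨_, _, h⟩ := h2
    exact hab (List.cons.inj h).1.symm

/-- Number of increasing tuples (sublists) of length `k` of pairwise related elements. -/
def cntI {α : Type*} (R : α → α → Bool) : ℕ → List α → ℕ
  | 0, _ => 1
  | k + 1, S => S.rec 0 fun a S' ih => cntI R k (S'.filter (R a)) + ih

theorem cntI_cons {α : Type*} (R : α → α → Bool) (k : ℕ) (a : α) (S : List α) :
    cntI R (k + 1) (a :: S) = cntI R k (S.filter (R a)) + cntI R (k + 1) S := rfl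

theorem cntI_map {α β : Type*} (R : α → α → Bool) (Q : β → β → Bool) (f : α → β)
    (T : List α) (h : ∀ a ∈ T, ∀ b ∈ T, Q (f a) (f b) = R a b) (k : ℕ) (S : List α)
    (hS : ∀ a ∈ S, a ∈ T) : cntI Q k (S.map f) = cntI R k S := by
  induction k generalizing S with
  | zero => rfl
  | succ k ih =>
    induction S with
    | nil => rfl
    | cons a S ihS =>
      have hS' : ∀ b ∈ S, b ∈ T := fun b hb => hS b (List.mem_cons_of_mem _ hb)
      rw [List.map_cons, cntI_cons, cntI_cons, ihS hS', List.filter_map,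
        ← ih _ (fun b hb => hS' b (List.mem_filter.1 hb).1)]
      congr 3
      apply List.filter_congr
      intro b hb
      exact h a (hS a (by simp)) b (hS' b hb)

/-- Double counting: choosing a distinguished element of a `(k+1)`-clique. -/
theorem sum_cntI {α : Type*} (R : α → α → Bool) (hR : ∀ a b, R a b = R b a) (n : ℕ) :
    ∀ (k : ℕ) (S : List α), S.length ≤ n → (∀ a ∈ S, R a a = false) →
      (S.map fun a => cntI R k (S.filter (R a))).sum = (k + 1) * cntI R (k + 1) S := by
  induction n with
  | zero =>
    intro k S hS _
    obtain rfl : S = [] := List.length_eq_zero_iff.1 (by omega)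
    simp [cntI]
  | succ n ih =>
    intro k S hS hirr
    cases S with
    | nil => simp [cntI]
    | cons b S =>
      have hlen : S.length ≤ n := by simpa using hS
      have hirr' : ∀ a ∈ S, R a a = false := fun a ha => hirr a (List.mem_cons_of_mem _ ha)
      have h1 := ih k S hlen hirr'
      have hb : R b b = false := hirr b (by simp)
      rw [List.map_cons, List.sum_cons, cntI_cons, List.filter_cons_of_neg (by simp [hb])]
      cases k with
      | zero =>
        have h0 : (S.map fun a => cntI R 0 ((b :: S).filter (R a))).sum =
          (S.map fun a => cntI R 0 (S.filter (R a))).sum := rfl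
        rw [h0, h1]; simp [cntI]
      | succ k =>
        have h2 := ih k (S.filter (R b)) ((List.length_filter_le _ _).trans hlen)
          (fun a ha => hirr' a (List.mem_filter.1 ha).1)
        have h3 : ∀ T : List α, (T.map fun a => cntI R (k + 1) ((b :: S).filter (R a))).sum =
            (T.map fun a => cntI R (k + 1) (S.filter (R a))).sum +
            ((T.filter (R b)).map fun a => cntI R k ((S.filter (R b)).filter (R a))).sum := by
          intro T
          induction T with
          | nil => rfl
          | cons a T ihT =>
            rw [List.map_cons, List.sum_cons, List.map_cons, List.sum_cons, ihT]
            cases hab : R b a with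
            | true =>
              rw [List.filter_cons_of_pos (by rw [hR, hab]), List.filter_cons_of_pos hab,
                List.map_cons, List.sum_cons, cntI_cons, List.filter_comm]
              ring
            | false =>
              rw [List.filter_cons_of_neg (by rw [hR, hab]; simp),
                List.filter_cons_of_neg (by simp [hab])]
              ring
        rw [h3, h1, h2]
        push_cast
        ring

theorem cntT_eq {α : Type*} (R : α → α → Bool) (hR : ∀ a b, R a b = R b a) (k : ℕ) (S : List α)
    (hirr : ∀ a ∈ S, R a a = false) : cntT R k S = k.factorial * cntI R k S := by
  induction k generalizing S with
  | zero => rfl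
  | succ k ih =>
    have h : (S.map fun a => cntT R k (S.filter (R a))) =
        S.map fun a => k.factorial * cntI R k (S.filter (R a)) :=
      List.map_congr_left fun a _ => ih _ fun b hb => hirr b (List.mem_filter.1 hb).1
    rw [cntT, h, List.sum_map_mul_left, sum_cntI R hR S.length k S le_rfl hirr,
      Nat.factorial_succ]
    ring

/-- Orthogonality test. -/
def orthB (x y : Fin 7 → ℤ) : Bool := decide (B x y = 0)

def idxTab : List (ℕ × ℕ) := (List.range 27).zip maskTab

def adjN (a b : ℕ × ℕ) : Bool := Nat.testBit a.2 b.1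

theorem lineTab_eq : lineTab = idxTab.map (fun a => lineTab.getD a.1 0) := by
  decide +kernel

theorem adj_ok : ∀ a ∈ idxTab, ∀ b ∈ idxTab,
    orthB (lineTab.getD a.1 0) (lineTab.getD b.1 0) = adjN a b := by
  decide +kernel

theorem cnt_idx : cntI adjN 6 idxTab = 72 := by
  decide +kernel

theorem lineTab_nodup : lineTab.Nodup := by decide +kernel

theorem lineTab_spec : ∀ v ∈ lineTab, B v v = -1 ∧ B v K = -1 := by decide +kernel

theorem B_comm (x y : Fin 7 → ℤ) : B x y = B y x := by unfold B; ring

theorem cnt_line : cntT orthB 6 lineTab = 51840 := by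
  have h : cntI orthB 6 lineTab = 72 := by
    rw [lineTab_eq, cntI_map adjN orthB _ idxTab adj_ok 6 idxTab (fun _ h => h), cnt_idx]
  rw [cntT_eq orthB (fun a b => by rw [orthB, orthB, B_comm]) 6 lineTab
    (fun a ha => by rw [orthB, (lineTab_spec a ha).1]; rfl), h]
  rfl

theorem mem_lineTab (v : Fin 7 → ℤ) (h1 : B v v = -1) (h2 : B v K = -1) : v ∈ lineTab := by
  have key : ∀ a b c d e f g : ℤ, B ![a, b, c, d, e, f, g] ![a, b, c, d, e, f, g] = -1 →
      B ![a, b, c, d, e, f, g] K = -1 → ![a, b, c, d, e, f, g] ∈ lineTab := by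
    clear h1 h2 v
    intro a b c d e f g h1 h2
    have h1' : a * a - b * b - c * c - d * d - e * e - f * f - g * g = -1 := h1
    have h2' : a * (-3) - b * 1 - c * 1 - d * 1 - e * 1 - f * 1 - g * 1 = -1 := h2
    have ha0 : 0 ≤ a := by
      nlinarith [sq_nonneg (b - c), sq_nonneg (6*b - (1 - 3*a)), sq_nonneg (6*c - (1 - 3*a)),
        sq_nonneg (6*d - (1 - 3*a)), sq_nonneg (6*e - (1 - 3*a)), sq_nonneg (6*f - (1 - 3*a)),
        sq_nonneg (6*g - (1 - 3*a))]
    have ha2 : a ≤ 2 := by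
      nlinarith [sq_nonneg (b - c), sq_nonneg (6*b - (1 - 3*a)), sq_nonneg (6*c - (1 - 3*a)),
        sq_nonneg (6*d - (1 - 3*a)), sq_nonneg (6*e - (1 - 3*a)), sq_nonneg (6*f - (1 - 3*a)),
        sq_nonneg (6*g - (1 - 3*a))]
    have pos : ∀ x : ℤ, 0 ≤ x * (x - 1) := by
      intro x
      rcases le_or_gt x 0 with h | h <;> nlinarith
    have neg : ∀ x : ℤ, 0 ≤ x * (x + 1) := by
      intro x
      rcases le_or_gt 0 x with h | h <;> nlinarith
    have dpos : ∀ x : ℤ, x * (x - 1) ≤ 0 → x ∈ ({0, 1} : Finset ℤ) := by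
      intro x h
      have : x * (x - 1) = 0 := le_antisymm h (pos x)
      rcases mul_eq_zero.1 this with h | h
      · simp [h]
      · simp [show x = 1 by linarith]
    have dneg : ∀ x : ℤ, x * (x + 1) ≤ 0 → x ∈ ({0, -1} : Finset ℤ) := by
      intro x h
      have : x * (x + 1) = 0 := le_antisymm h (neg x)
      rcases mul_eq_zero.1 this with h | h
      · simp [h]
      · simp [show x = -1 by linarith]
    have all0 : ∀ b ∈ ({0, 1} : Finset ℤ), ∀ c ∈ ({0, 1} : Finset ℤ), ∀ d ∈ ({0, 1} : Finset ℤ),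
        ∀ e ∈ ({0, 1} : Finset ℤ), ∀ f ∈ ({0, 1} : Finset ℤ), ∀ g ∈ ({0, 1} : Finset ℤ),
        B ![0, b, c, d, e, f, g] K = -1 → ![0, b, c, d, e, f, g] ∈ lineTab := by
      decide +kernel
    have all1 : ∀ a ∈ ({1, 2} : Finset ℤ), ∀ b ∈ ({0, -1} : Finset ℤ),
        ∀ c ∈ ({0, -1} : Finset ℤ), ∀ d ∈ ({0, -1} : Finset ℤ),
        ∀ e ∈ ({0, -1} : Finset ℤ), ∀ f ∈ ({0, -1} : Finset ℤ), ∀ g ∈ ({0, -1} : Finset ℤ),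
        B ![a, b, c, d, e, f, g] K = -1 → ![a, b, c, d, e, f, g] ∈ lineTab := by
      decide +kernel
    obtain rfl | ha : a = 0 ∨ (a = 1 ∨ a = 2) := by omega
    · have := pos b; have := pos c; have := pos d; have := pos e; have := pos f; have := pos g
      exact all0 b (dpos b (by linarith)) c (dpos c (by linarith)) d (dpos d (by linarith))
        e (dpos e (by linarith)) f (dpos f (by linarith)) g (dpos g (by linarith)) h2
    · have := neg b; have := neg c; have := neg d; have := neg e; have := neg f; have := neg g
      have haa : a * a = 3 * a - 2 := by rcases ha with rfl | rfl <;> norm_num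
      exact all1 a (by simpa using ha) b (dneg b (by linarith)) c (dneg c (by linarith))
        d (dneg d (by linarith))
        e (dneg e (by linarith)) f (dneg f (by linarith)) g (dneg g (by linarith)) h2
  have hv : v = ![v 0, v 1, v 2, v 3, v 4, v 5, v 6] := by
    funext i; fin_cases i <;> rfl
  rw [hv] at h1 h2 ⊢
  exact key _ _ _ _ _ _ _ h1 h2

/-- The Gram matrix. -/
def Gm (R : Type*) [CommRing R] : Matrix (Fin 7) (Fin 7) R :=
  Matrix.diagonal ![1, -1, -1, -1, -1, -1, -1]

theorem Gm_sq (R : Type*) [CommRing R] : Gm R * Gm R = 1 := by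
  rw [Gm, Matrix.diagonal_mul_diagonal, ← Matrix.diagonal_one]
  congr 1
  funext i
  fin_cases i <;> simp

theorem PGP {R : Type*} [CommRing R] (P : Matrix (Fin 7) (Fin 7) R) (i j : Fin 7) :
    (P * Gm R * P.transpose) i j = P i 0 * P j 0 - P i 1 * P j 1 - P i 2 * P j 2 - P i 3 * P j 3
      - P i 4 * P j 4 - P i 5 * P j 5 - P i 6 * P j 6 := by
  rw [Gm, Matrix.mul_apply]
  simp only [Matrix.mul_diagonal, Matrix.transpose_apply, Fin.sum_univ_seven]
  simp [-mul_eq_mul_left_iff]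
  ring

theorem PGP_flip {R : Type*} [CommRing R] (P : Matrix (Fin 7) (Fin 7) R)
    (h : P * Gm R * P.transpose = Gm R) : P.transpose * Gm R * P = Gm R := by
  have h1 : (P * Gm R) * (P.transpose * Gm R) = 1 := by
    rw [← mul_assoc, h, Gm_sq]
  have h2 := mul_eq_one_comm.1 h1
  calc P.transpose * Gm R * P = (P.transpose * Gm R * (P * Gm R)) * Gm R := by
        simp only [mul_assoc, Gm_sq, mul_one]
    _ = Gm R := by rw [h2, one_mul]

/-- `u = Σ tᵢ - K`. -/
def uvec (t : Fin 6 → Fin 7 → ℤ) : Fin 7 → ℤ :=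
  fun j => t 0 j + t 1 j + t 2 j + t 3 j + t 4 j + t 5 j - K j

theorem B_uvec (t : Fin 6 → Fin 7 → ℤ) (x : Fin 7 → ℤ) :
    B (uvec t) x = B (t 0) x + B (t 1) x + B (t 2) x + B (t 3) x + B (t 4) x + B (t 5) x
      - B K x := by
  unfold B uvec; ring

theorem B_uvec_t (t : Fin 6 → Fin 7 → ℤ) (hK : ∀ i, B (t i) K = -1)
    (hB : ∀ i j, B (t i) (t j) = if i = j then -1 else 0) (i : Fin 6) : B (uvec t) (t i) = 0 := by
  rw [B_uvec, B_comm K, hK]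
  simp only [hB]
  fin_cases i <;> decide

theorem B_uvec_u (t : Fin 6 → Fin 7 → ℤ) (hK : ∀ i, B (t i) K = -1)
    (hB : ∀ i j, B (t i) (t j) = if i = j then -1 else 0) : B (uvec t) (uvec t) = 9 := by
  have h := B_uvec_t t hK hB
  rw [B_uvec]
  simp only [B_comm _ (uvec t), h]
  rw [B_uvec]
  simp only [hK]
  decide

theorem uvec_dvd (t : Fin 6 → Fin 7 → ℤ) (hK : ∀ i, B (t i) K = -1)
    (hB : ∀ i j, B (t i) (t j) = if i = j then -1 else 0) (j : Fin 7) : 3 ∣ uvec t j := by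
  let P : Matrix (Fin 7) (Fin 7) ℚ :=
    Matrix.of (Fin.cons (fun j => (uvec t j : ℚ) / 3) (fun i j => (t i j : ℚ)))
  have hut := B_uvec_t t hK hB
  have huu := B_uvec_u t hK hB
  have hP : P * Gm ℚ * P.transpose = Gm ℚ := by
    ext a b
    rw [PGP]
    refine Fin.cases ?_ (fun a => ?_) a <;> refine Fin.cases ?_ (fun b => ?_) b
    · have h : ((B (uvec t) (uvec t) : ℤ) : ℚ) = 9 := by rw [huu]; norm_num
      simp only [B] at h
      push_cast at h
      simp only [P, Matrix.of_apply, Fin.cons_zero, Gm, Matrix.diagonal_apply_eq, Matrix.cons_val_zero]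
      linear_combination h / 9
    · have h : ((B (uvec t) (t b) : ℤ) : ℚ) = 0 := by rw [hut]; norm_num
      simp only [B] at h
      push_cast at h
      rw [Gm, Matrix.diagonal_apply_ne _ (Fin.succ_ne_zero b).symm]
      simp only [P, Matrix.of_apply, Fin.cons_zero, Fin.cons_succ]
      linear_combination h / 3
    · have h : ((B (uvec t) (t a) : ℤ) : ℚ) = 0 := by rw [hut]; norm_num
      simp only [B] at h
      push_cast at h
      rw [Gm, Matrix.diagonal_apply_ne _ (Fin.succ_ne_zero a)]
      simp only [P, Matrix.of_apply, Fin.cons_zero, Fin.cons_succ]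
      linear_combination h / 3
    · have h : ((B (t a) (t b) : ℤ) : ℚ) = Gm ℚ a.succ b.succ := by
        rw [hB, Gm, Matrix.diagonal_apply]
        simp only [Fin.succ_inj]
        split_ifs
        · fin_cases a <;> simp
        · simp
      rw [← h]
      simp [P, B]
  have h2 := congrFun (congrFun (PGP_flip P hP) j) j
  have h3 : ∃ n : ℤ, (Gm ℚ j j : ℚ) = n := by
    rw [Gm, Matrix.diagonal_apply_eq]
    fin_cases j
    · exact ⟨1, by simp⟩
    all_goals exact ⟨-1, by simp⟩
  obtain ⟨n, hn⟩ := h3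
  have h4 := PGP P.transpose j j
  rw [Matrix.transpose_transpose, h2, hn] at h4
  have h5 : ((uvec t j : ℚ)) ^ 2 = 9 * (n + t 0 j ^ 2 + t 1 j ^ 2 + t 2 j ^ 2 + t 3 j ^ 2
      + t 4 j ^ 2 + t 5 j ^ 2) := by
    have e0 : P 0 j = (uvec t j : ℚ) / 3 := rfl
    have e1 : P 1 j = t 0 j := rfl
    have e2 : P 2 j = t 1 j := rfl
    have e3 : P 3 j = t 2 j := rfl
    have e4 : P 4 j = t 3 j := rfl
    have e5 : P 5 j = t 4 j := rfl
    have e6 : P 6 j = t 5 j := rfl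
    simp only [Matrix.transpose_apply, e0, e1, e2, e3, e4, e5, e6] at h4
    linear_combination (-9) * h4
  have h6 : (uvec t j) ^ 2 = 9 * (n + t 0 j ^ 2 + t 1 j ^ 2 + t 2 j ^ 2 + t 3 j ^ 2
      + t 4 j ^ 2 + t 5 j ^ 2) := by exact_mod_cast h5
  have : (3 : ℤ) ^ 2 ∣ (uvec t j) ^ 2 := by
    rw [h6]; exact Dvd.intro _ rfl
  exact (Int.pow_dvd_pow_iff (by norm_num)).1 this

theorem B_eq_mat (x y : Fin 7 → ℤ) : B x y = Matrix.vecMul x (Gm ℤ) ⬝ᵥ y := by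
  simp only [Gm, Matrix.vecMul_diagonal, dotProduct, Fin.sum_univ_seven, B]
  simp
  ring

theorem exists_aut (t : Fin 6 → Fin 7 → ℤ) (hK : ∀ i, B (t i) K = -1)
    (hB : ∀ i j, B (t i) (t j) = if i = j then -1 else 0) :
    ∃ g ∈ Wset, ∀ i : Fin 6, g (Pi.single i.succ 1) = t i := by
  choose h hh using uvec_dvd t hK hB
  have hut := B_uvec_t t hK hB
  have huu := B_uvec_u t hK hB
  have hu : ∀ x, B (uvec t) x = 3 * B h x := by
    intro x; simp only [B, hh]; ring
  have hht : ∀ i, B h (t i) = 0 := by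
    intro i; have := hut i; rw [hu] at this; omega
  have hhh : B h h = 1 := by
    rw [hu, B_comm, hu] at huu; omega
  let P : Matrix (Fin 7) (Fin 7) ℤ := Matrix.of (Fin.cons h t)
  have hP : P * Gm ℤ * P.transpose = Gm ℤ := by
    ext a b
    rw [PGP]
    change B (P a) (P b) = _
    refine Fin.cases ?_ (fun a => ?_) a <;> refine Fin.cases ?_ (fun b => ?_) b
    · exact hhh
    · rw [Gm, Matrix.diagonal_apply_ne _ (Fin.succ_ne_zero b).symm]
      exact hht b
    · rw [Gm, Matrix.diagonal_apply_ne _ (Fin.succ_ne_zero a), B_comm]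
      exact hht a
    · change B (t a) (t b) = _
      rw [hB, Gm, Matrix.diagonal_apply]
      simp only [Fin.succ_inj]
      split_ifs
      · fin_cases a <;> simp
      · rfl
  have hPN : P * (Gm ℤ * P.transpose * Gm ℤ) = 1 := by
    rw [← mul_assoc, ← mul_assoc, hP, Gm_sq]
  have hNP := mul_eq_one_comm.1 hPN
  let g : (Fin 7 → ℤ) ≃ₗ[ℤ] (Fin 7 → ℤ) :=
    LinearEquiv.ofLinearMap (Matrix.vecMulLinear P) (Matrix.vecMulLinear (Gm ℤ * P.transpose * Gm ℤ))
      (by ext1 i; ext1; simp only [LinearMap.comp_apply, Matrix.vecMulLinear_apply, Matrix.vecMul_vecMul, hNP, Matrix.vecMul_one, LinearMap.id_apply])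
      (by ext1 i; ext1; simp only [LinearMap.comp_apply, Matrix.vecMulLinear_apply, Matrix.vecMul_vecMul, hPN, Matrix.vecMul_one, LinearMap.id_apply])
  have hg : ∀ x, g x = Matrix.vecMul x P := fun x => rfl
  refine ⟨g, ⟨?_, ?_⟩, ?_⟩
  · intro x y
    rw [hg, hg, B_eq_mat, B_eq_mat, Matrix.vecMul_vecMul, ← Matrix.mulVec_transpose P y,
      Matrix.dotProduct_mulVec, Matrix.vecMul_vecMul, hP]
  · rw [hg]
    funext j
    have e : uvec t j = 3 * h j := hh j
    simp only [uvec] at e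
    have : Matrix.vecMul K P j = -3 * h j + t 0 j + t 1 j + t 2 j + t 3 j + t 4 j + t 5 j := by
      simp only [Matrix.vecMul, dotProduct, Fin.sum_univ_seven]
      change -3 * h j + 1 * t 0 j + 1 * t 1 j + 1 * t 2 j + 1 * t 3 j + 1 * t 4 j + 1 * t 5 j = _
      ring
    rw [this]; linarith
  · intro i
    rw [hg, Matrix.single_one_vecMul]
    rfl

/-- The group. -/
def Wgrp : Subgroup ((Fin 7 → ℤ) ≃ₗ[ℤ] (Fin 7 → ℤ)) where
  carrier := Wset
  one_mem' := ⟨fun _ _ => rfl, rfl⟩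
  mul_mem' := by
    rintro a b ⟨ha, ha'⟩ ⟨hb, hb'⟩
    refine ⟨fun x y => ?_, ?_⟩
    · rw [LinearEquiv.mul_apply, LinearEquiv.mul_apply, ha, hb]
    · rw [LinearEquiv.mul_apply, hb', ha']
  inv_mem' := by
    rintro a ⟨ha, ha'⟩
    have h : ∀ x, a (a⁻¹ x) = x := fun x => a.apply_symm_apply x
    refine ⟨fun x y => ?_, ?_⟩
    · rw [← ha, h, h]
    · apply a.injective; rw [h, ha']

theorem e_spec (i j : Fin 6) : B (Pi.single i.succ 1) (Pi.single j.succ 1) =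
    if i = j then -1 else 0 := by
  revert i j; decide +kernel

theorem e_K (i : Fin 6) : B (Pi.single i.succ 1) K = -1 := by
  revert i; decide +kernel

theorem aut_ext (g g' : (Fin 7 → ℤ) ≃ₗ[ℤ] (Fin 7 → ℤ)) (hg : g K = K) (hg' : g' K = K)
    (h : ∀ i : Fin 6, g (Pi.single i.succ 1) = g' (Pi.single i.succ 1)) : g = g' := by
  have hK : (3 : ℤ) • (Pi.single 0 1 : Fin 7 → ℤ) = ∑ i : Fin 6, Pi.single i.succ 1 - K := by
    decide +kernel
  have h0 : g (Pi.single 0 1) = g' (Pi.single 0 1) := by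
    have : (3 : ℤ) • g (Pi.single 0 1) = (3 : ℤ) • g' (Pi.single 0 1) := by
      rw [← map_smul, ← map_smul, hK, map_sub, map_sub, map_sum, map_sum, hg, hg']
      simp only [h]
    exact smul_right_injective _ (by norm_num : (3 : ℤ) ≠ 0) this
  apply LinearEquiv.toLinearMap_injective
  refine LinearMap.pi_ext' fun i => LinearMap.ext_ring ?_
  refine Fin.cases ?_ (fun i => ?_) i
  · exact h0
  · exact h i

def toTuple (g : Wgrp) : {l // l ∈ enumT orthB 6 lineTab} :=
  ⟨List.ofFn fun i : Fin 6 => g.1 (Pi.single i.succ 1), by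
    have hg : g.1 ∈ Wset := g.2
    rw [mem_enumT]
    refine ⟨List.length_ofFn, ?_, ?_⟩
    · rw [List.pairwise_ofFn]
      intro i j hij
      rw [orthB, decide_eq_true_iff, hg.1, e_spec, if_neg hij.ne]
    · intro x hx
      rw [List.mem_ofFn] at hx
      obtain ⟨i, rfl⟩ := hx
      apply mem_lineTab
      · rw [hg.1, e_spec, if_pos rfl]
      · conv_lhs => rw [← hg.2]
        rw [hg.1, e_K]⟩

theorem toTuple_bij : Function.Bijective toTuple := by
  constructor
  · intro g g' h
    have h0 : (List.ofFn fun i : Fin 6 => g.1 (Pi.single i.succ 1)) =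
        List.ofFn fun i : Fin 6 => g'.1 (Pi.single i.succ 1) := congrArg Subtype.val h
    have h1 := List.ofFn_injective h0
    exact Subtype.ext (aut_ext _ _ g.2.2 g'.2.2 (fun i => congrFun h1 i))
  · rintro ⟨l, hl⟩
    have hl' := hl
    rw [mem_enumT] at hl'
    obtain ⟨h1, h2, h3⟩ := hl'
    obtain ⟨t, rfl⟩ : ∃ t : Fin 6 → Fin 7 → ℤ, l = List.ofFn t := by
      exact ⟨fun i => l.get (i.cast h1.symm), by
        apply List.ext_get
        · simp [h1]
        · intro n _ _; simp [-List.ofFn_succ]⟩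
    rw [List.pairwise_ofFn] at h2
    have hm : ∀ i, t i ∈ lineTab := fun i => h3 _ (List.mem_ofFn.2 ⟨i, rfl⟩)
    have h2' : ∀ i j, i < j → B (t i) (t j) = 0 := fun i j hij => by
      simpa [orthB] using h2 hij
    obtain ⟨g, hg, hgt⟩ := exists_aut t (fun i => (lineTab_spec _ (hm i)).2) (fun i j => by
      rcases lt_trichotomy i j with h | h | h
      · rw [if_neg h.ne, h2' i j h]
      · rw [if_pos h, h, (lineTab_spec _ (hm j)).1]
      · rw [if_neg h.ne', B_comm, h2' j i h])
    exact ⟨⟨g, hg⟩, Subtype.ext (congrArg List.ofFn (funext hgt))⟩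

theorem card_Wgrp : Nat.card Wgrp = 51840 := by
  rw [Nat.card_congr (Equiv.ofBijective _ toTuple_bij)]
  rw [← cnt_line, ← length_enumT]
  rw [← List.toFinset_card_of_nodup (nodup_enumT orthB 6 lineTab lineTab_nodup)]
  rw [← Nat.subtype_card _ (fun x => List.mem_toFinset)]

/-- The form-preserving automorphisms fixing `K` form a finite group of order 51840
(the Weyl group of the `E₆` lattice). -/
theorem weyl_group_order :
    ∃ W : Subgroup ((Fin 7 → ℤ) ≃ₗ[ℤ] (Fin 7 → ℤ)),
      (W : Set ((Fin 7 → ℤ) ≃ₗ[ℤ] (Fin 7 → ℤ))) = Wset ∧ Finite ↥W ∧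
        Nat.card ↥W = 51840 :=
  ⟨Wgrp, rfl, Nat.finite_of_card_ne_zero (by rw [card_Wgrp]; norm_num), card_Wgrp⟩
end

section
/- The orthogonal complement K^⊥ = {v ∈ (Fin 7 → ℤ) : ⟨v, K⟩ = 0} is a free ℤ-module of rank 6 on which the bilinear form is even, i.e. ⟨v, v⟩ is an even integer for every v ∈ K^⊥, and negative definite, i.e. ⟨v, v⟩ < 0 for every nonzero v ∈ K^⊥. -/
/-- The orthogonal complement of `K`, as a ℤ-submodule of the lattice. -/
def Kperp : Submodule ℤ (Fin 7 → ℤ) where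
  carrier := {v | B v K = 0}
  zero_mem' := by simp [B]
  add_mem' := by
    intro a b ha hb
    simp only [Set.mem_setOf_eq, B, Pi.add_apply] at *
    linear_combination ha + hb
  smul_mem' := by
    intro c v hv
    simp only [Set.mem_setOf_eq, B, Pi.smul_apply, smul_eq_mul] at *
    linear_combination c * hv

lemma mem_Kperp_iff (v : Fin 7 → ℤ) :
    v ∈ Kperp ↔ v 6 = -3 * v 0 - v 1 - v 2 - v 3 - v 4 - v 5 := by
  change B v K = 0 ↔ _
  have : B v K = -3 * v 0 - v 1 - v 2 - v 3 - v 4 - v 5 - v 6 := by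
    simp [B, K]; ring
  rw [this]
  constructor <;> intro h <;> linarith

/-- Coordinates on `K^⊥`: forget the last entry. -/
def KperpEquiv : ↥Kperp ≃ₗ[ℤ] (Fin 6 → ℤ) where
  toFun v := fun i => v.1 i.castSucc
  map_add' _ _ := rfl
  map_smul' _ _ := rfl
  invFun w := ⟨![w 0, w 1, w 2, w 3, w 4, w 5,
      -3 * w 0 - w 1 - w 2 - w 3 - w 4 - w 5], (mem_Kperp_iff _).2 rfl⟩
  left_inv v := by
    have h := (mem_Kperp_iff _).1 v.2
    ext i
    fin_cases i
    · rfl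
    · rfl
    · rfl
    · rfl
    · rfl
    · rfl
    · exact h.symm
  right_inv w := by
    ext i
    fin_cases i <;> rfl

/-- `K^⊥` is a free ℤ-module of rank 6 on which the form is even and negative definite
(it is the `E₆` lattice, up to sign). -/
theorem Kperp_is_E6 :
    Module.Free ℤ ↥Kperp ∧ Module.finrank ℤ ↥Kperp = 6 ∧
    (∀ v ∈ Kperp, Even (B v v)) ∧
    (∀ v ∈ Kperp, v ≠ 0 → B v v < 0) := by
  refine ⟨Module.Free.of_equiv KperpEquiv.symm, ?_, ?_, ?_⟩
  · rw [KperpEquiv.finrank_eq]; simp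
  · intro v hv
    have h := (mem_Kperp_iff v).1 hv
    have e : ∀ a : ℤ, ∃ k, a * a = a + 2 * k := fun a => by
      obtain ⟨k, hk⟩ := Int.even_mul_pred_self a
      exact ⟨k, by linarith⟩
    obtain ⟨k0, h0⟩ := e (v 0)
    obtain ⟨k1, h1⟩ := e (v 1)
    obtain ⟨k2, h2⟩ := e (v 2)
    obtain ⟨k3, h3⟩ := e (v 3)
    obtain ⟨k4, h4⟩ := e (v 4)
    obtain ⟨k5, h5⟩ := e (v 5)
    obtain ⟨k6, h6⟩ := e (v 6)
    refine ⟨2 * v 0 + k0 - k1 - k2 - k3 - k4 - k5 - k6, ?_⟩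
    unfold B
    linarith
  · intro v hv hne
    have h := (mem_Kperp_iff v).1 hv
    by_contra hB
    apply hne
    -- complete squares: the mean of `v₁, …, v₆` is `-v₀/2`
    have key : 4 * B v v = -(2 * v 0 ^ 2) - ((2 * v 1 + v 0) ^ 2 + (2 * v 2 + v 0) ^ 2
        + (2 * v 3 + v 0) ^ 2 + (2 * v 4 + v 0) ^ 2 + (2 * v 5 + v 0) ^ 2
        + (2 * v 6 + v 0) ^ 2) := by
      unfold B
      linear_combination 4 * v 0 * h
    have p0 := sq_nonneg (v 0)
    have p1 := sq_nonneg (2 * v 1 + v 0)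
    have p2 := sq_nonneg (2 * v 2 + v 0)
    have p3 := sq_nonneg (2 * v 3 + v 0)
    have p4 := sq_nonneg (2 * v 4 + v 0)
    have p5 := sq_nonneg (2 * v 5 + v 0)
    have p6 := sq_nonneg (2 * v 6 + v 0)
    have z0 : v 0 = 0 := pow_eq_zero_iff two_ne_zero |>.1 (by linarith)
    have z1 : 2 * v 1 + v 0 = 0 := pow_eq_zero_iff two_ne_zero |>.1 (by linarith)
    have z2 : 2 * v 2 + v 0 = 0 := pow_eq_zero_iff two_ne_zero |>.1 (by linarith)
    have z3 : 2 * v 3 + v 0 = 0 := pow_eq_zero_iff two_ne_zero |>.1 (by linarith)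
    have z4 : 2 * v 4 + v 0 = 0 := pow_eq_zero_iff two_ne_zero |>.1 (by linarith)
    have z5 : 2 * v 5 + v 0 = 0 := pow_eq_zero_iff two_ne_zero |>.1 (by linarith)
    have z6 : 2 * v 6 + v 0 = 0 := pow_eq_zero_iff two_ne_zero |>.1 (by linarith)
    ext i
    fin_cases i <;> simp <;> omega
end
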